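/- Both first-level projections of the level-one stabilizer of the first Grigorchuk group are all of Γ: for every g ∈ Γ there exists h₀ ∈ Γ with h₀ (false :: w) = false :: g w for all w : List Bool, and there exists h₁ ∈ Γ with h₁ (true :: w) = true :: g w for all w : List Bool. -/

import Mathlib

/-!
Write `(g, h)` for `pair g h`. Then `b = (a, c)`, `c = (a, d)`, `d = (1, b)`, and conjugating by `a`
swaps the coordinates, so `a * b * a = (c, a)`. Hence each of `a`, `b`, `c`, `d` is the second
coordinate of an element of `Γ`. Since `pair` is a homomorphism, second coordinates of pairs in `Γ`
form a subgroup, which therefore contains `Γ`; swapping coordinates gives the same for the first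
coordinate.
-/

namespace Grigorchuk

/-- Underlying map of the Grigorchuk generator `a`: flip the first letter. -/
def aF : List Bool → List Bool
  | [] => []
  | x :: w => (!x) :: w

mutual
  /-- Underlying map of the Grigorchuk generator `b`. -/
  def bF : List Bool → List Bool
    | [] => []
    | false :: w => false :: aF w
    | true :: w => true :: cF w
  /-- Underlying map of the Grigorchuk generator `c`. -/
  def cF : List Bool → List Bool
    | [] => []
    | false :: w => false :: aF w
    | true :: w => true :: dF w
  /-- Underlying map of the Grigorchuk generator `d`. -/
  def dF : List Bool → List Bool
    | [] => []
    | false :: w => false :: w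
    | true :: w => true :: bF w
end

theorem aF_aF : ∀ w : List Bool, aF (aF w) = w := by
  intro w
  cases w with
  | nil => rfl
  | cons x w => simp [aF]

theorem bcd_invol : ∀ w : List Bool,
    bF (bF w) = w ∧ cF (cF w) = w ∧ dF (dF w) = w := by
  intro w
  induction w with
  | nil => simp [bF, cF, dF]
  | cons x w ih =>
    cases x <;> simp [bF, cF, dF, aF_aF, ih.1, ih.2.1, ih.2.2]

/-- The Grigorchuk generator `a` as a permutation of `List Bool`. -/
def a : Equiv.Perm (List Bool) := ⟨aF, aF, aF_aF, aF_aF⟩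

/-- The Grigorchuk generator `b` as a permutation of `List Bool`. -/
def b : Equiv.Perm (List Bool) :=
  ⟨bF, bF, fun w => (bcd_invol w).1, fun w => (bcd_invol w).1⟩

/-- The Grigorchuk generator `c` as a permutation of `List Bool`. -/
def c : Equiv.Perm (List Bool) :=
  ⟨cF, cF, fun w => (bcd_invol w).2.1, fun w => (bcd_invol w).2.1⟩

/-- The Grigorchuk generator `d` as a permutation of `List Bool`. -/
def d : Equiv.Perm (List Bool) :=
  ⟨dF, dF, fun w => (bcd_invol w).2.2, fun w => (bcd_invol w).2.2⟩

/-- Underlying map of the pair `(g, h)` acting on the two subtrees. -/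
def pairF (g h : List Bool → List Bool) : List Bool → List Bool
  | [] => []
  | false :: w => false :: g w
  | true :: w => true :: h w

/-- The permutation of `List Bool` acting as `g` on the subtree below `false`
and as `h` on the subtree below `true`, fixing the root. -/
def pair (g h : Equiv.Perm (List Bool)) : Equiv.Perm (List Bool) :=
  ⟨pairF g h, pairF g.symm h.symm,
    fun w => by cases w with
      | nil => rfl
      | cons x w => cases x <;> simp [pairF],
    fun w => by cases w with
      | nil => rfl
      | cons x w => cases x <;> simp [pairF]⟩

/-- The first Grigorchuk group: the subgroup of `Equiv.Perm (List Bool)`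
generated by `a`, `b`, `c`, `d`. -/
def Γ : Subgroup (Equiv.Perm (List Bool)) := Subgroup.closure {a, b, c, d}

/-- The normal closure in `Γ` of the element `(a * b)^2`, realized as the subgroup
of `Equiv.Perm (List Bool)` generated by all `Γ`-conjugates of `(a * b)^2`. -/
def K : Subgroup (Equiv.Perm (List Bool)) :=
  Subgroup.closure {g | ∃ x ∈ Γ, g = x * (a * b) ^ 2 * x⁻¹}

end Grigorchuk

namespace Grigorchuk

open Equiv (Perm)

/-- The embedding `(g, h) ↦ pair g h` of `Perm (List Bool) × Perm (List Bool)`, whose inverse on its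
range is the wreath recursion. The preimage of `Γ` consists of the coordinate pairs of the elements
of the level-one stabilizer of `Γ`. -/
def pairHom : Perm (List Bool) × Perm (List Bool) →* Perm (List Bool) where
  toFun p := pair p.1 p.2
  map_one' := by ext1 w; rcases w with _ | ⟨_ | _, w⟩ <;> rfl
  map_mul' _ _ := by ext1 w; rcases w with _ | ⟨_ | _, w⟩ <;> rfl

theorem b_eq_pair : b = pair a c := by
  ext1 w
  rcases w with _ | ⟨_ | _, w⟩ <;> simp [a, b, c, pair, pairF, bF]

theorem c_eq_pair : c = pair a d := by
  ext1 w
  rcases w with _ | ⟨_ | _, w⟩ <;> simp [a, c, d, pair, pairF, cF]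

theorem d_eq_pair : d = pair 1 b := by
  ext1 w
  rcases w with _ | ⟨_ | _, w⟩ <;> simp [b, d, pair, pairF, dF]

theorem a_mul_pair_mul_a (g h : Perm (List Bool)) : a * pair g h * a = pair h g := by
  ext1 w
  rcases w with _ | ⟨_ | _, w⟩ <;> rfl

theorem a_mem_Γ : a ∈ Γ := Subgroup.subset_closure (by simp)

theorem b_mem_Γ : b ∈ Γ := Subgroup.subset_closure (by simp)

theorem c_mem_Γ : c ∈ Γ := Subgroup.subset_closure (by simp)

theorem d_mem_Γ : d ∈ Γ := Subgroup.subset_closure (by simp)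

theorem pair_mem_Γ_swap {g h : Perm (List Bool)} (hgh : pair g h ∈ Γ) : pair h g ∈ Γ :=
  a_mul_pair_mul_a g h ▸ mul_mem (mul_mem a_mem_Γ hgh) a_mem_Γ

theorem Γ_le_map_snd_comap_pairHom : Γ ≤ (Γ.comap pairHom).map (MonoidHom.snd _ _) := by
  have pair_a_c_mem : pair a c ∈ Γ := b_eq_pair ▸ b_mem_Γ
  have pair_a_d_mem : pair a d ∈ Γ := c_eq_pair ▸ c_mem_Γ
  have pair_one_b_mem : pair 1 b ∈ Γ := d_eq_pair ▸ d_mem_Γ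
  refine (Subgroup.closure_le _).mpr ?_
  rintro _ (rfl | rfl | rfl | rfl)
  · exact ⟨(c, a), pair_mem_Γ_swap pair_a_c_mem, rfl⟩
  · exact ⟨(1, b), pair_one_b_mem, rfl⟩
  · exact ⟨(a, c), pair_a_c_mem, rfl⟩
  · exact ⟨(a, d), pair_a_d_mem, rfl⟩

theorem exists_pair_mem_Γ {g : Perm (List Bool)} (hg : g ∈ Γ) : ∃ k, pair k g ∈ Γ := by
  obtain ⟨⟨k, _⟩, hk, rfl⟩ := Γ_le_map_snd_comap_pairHom hg
  exact ⟨k, hk⟩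

end Grigorchuk

open Grigorchuk in
/-- Both first-level projections of the level-one stabilizer of the first
Grigorchuk group are all of `Γ`. -/
theorem grigorchuk_level_one_projections (g : Equiv.Perm (List Bool)) (hg : g ∈ Γ) :
    (∃ h₀ ∈ Γ, ∀ w : List Bool, h₀ (false :: w) = false :: g w) ∧
      (∃ h₁ ∈ Γ, ∀ w : List Bool, h₁ (true :: w) = true :: g w) := by
  obtain ⟨k, hk⟩ := exists_pair_mem_Γ hg
  exact ⟨⟨pair g k, pair_mem_Γ_swap hk, fun _ => rfl⟩, pair k g, hk, fun _ => rfl⟩
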